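/- Fix integers n ≥ 2 and d ≥ 4, and set x := ⌈nd/2⌉. Let C ⊂ P^n be a rational normal curve and let S ⊂ C be any set of x points on C. Then h^1(I_{2S}(d)) = 0. -/

import Mathlib

open MvPolynomial

noncomputable section

/-- Projective `n`-space over `k`, as the projectivization of `k^(n+1)`. -/
abbrev ProjSpace (k : Type*) [Field k] (n : ℕ) := Projectivization k (Fin (n+1) → k)

variable (k : Type*) [Field k]

/-- Evaluation at a vector, as a linear map on polynomials. -/
def evalLM {n : ℕ} (v : Fin n → k) : MvPolynomial (Fin n) k →ₗ[k] k :=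
  (MvPolynomial.aeval v).toLinearMap

/-- The submodule of polynomials vanishing together with all first partial derivatives at `v`. -/
def doubleVanishing {n : ℕ} (v : Fin n → k) : Submodule k (MvPolynomial (Fin n) k) :=
  LinearMap.ker (evalLM k v) ⊓
    ⨅ i : Fin n, LinearMap.ker ((evalLM k v).comp (MvPolynomial.pderiv i).toLinearMap)

/-- `h^0(I_{2S}(d))`: dimension of degree-`d` forms vanishing doubly at all points of `S`. -/
def h0 (n d : ℕ) (S : Finset (ProjSpace k n)) : ℕ :=
  Module.finrank k
    ↥(homogeneousSubmodule (Fin (n+1)) k d ⊓ ⨅ p ∈ S, doubleVanishing k p.rep)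

/-- `h^1(I_{2S}(d)) = h^0(I_{2S}(d)) + (n+1)#S - C(n+d,n)`. -/
def h1 (n d : ℕ) (S : Finset (ProjSpace k n)) : ℤ :=
  (h0 k n d S : ℤ) + (n+1) * S.card - (n+d).choose n

/-- `S` spans `P^n`: it is contained in no hyperplane. -/
def Spans (n : ℕ) (S : Finset (ProjSpace k n)) : Prop :=
  Submodule.span k (Projectivization.rep '' (S : Set (ProjSpace k n))) = ⊤

/-- The Terracini locus `T(n,d;x)`. -/
def Terracini (n d x : ℕ) : Set (Finset (ProjSpace k n)) :=
  {S | S.card = x ∧ Spans k n S ∧ 0 < h0 k n d S ∧ 0 < h1 k n d S}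

/-- The minimally Terracini locus `T(n,d;x)'`. -/
def minTerracini (n d x : ℕ) : Set (Finset (ProjSpace k n)) :=
  {S | S ∈ Terracini k n d x ∧ ∀ A : Finset (ProjSpace k n), A ⊂ S → h1 k n d A = 0}

end
/-- The `i`-th coordinate `s^(n-i) t^i` of the standard rational normal curve of degree `n`. -/
def stdRNCvec (k : Type*) [Field k] (n : ℕ) (s t : k) : Fin (n+1) → k :=
  fun i => s ^ (n - (i : ℕ)) * t ^ (i : ℕ)

/-- The standard rational normal curve in `P^n`: the image of
`[s:t] ↦ [s^n : s^(n-1)t : ⋯ : t^n]`. -/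
def stdRNC (k : Type*) [Field k] (n : ℕ) : Set (ProjSpace k n) :=
  {p | ∃ s t : k, (s ≠ 0 ∨ t ≠ 0) ∧
    Projectivization.submodule p = Submodule.span k {stdRNCvec k n s t}}

/-- A rational normal curve in `P^n`: a curve projectively equivalent to the standard one. -/
def IsRNC (k : Type*) [Field k] (n : ℕ) (C : Set (ProjSpace k n)) : Prop :=
  ∃ g : (Fin (n+1) → k) ≃ₗ[k] (Fin (n+1) → k),
    C = {p | ∃ s t : k, (s ≠ 0 ∨ t ≠ 0) ∧
      Projectivization.submodule p = Submodule.span k {g (stdRNCvec k n s t)}}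

theorem finrank_homog (k : Type*) [Field k] (n d : ℕ) :
    Module.finrank k ↥(homogeneousSubmodule (Fin (n+1)) k d) = (n+d).choose n := by
  have h1 : homogeneousSubmodule (Fin (n+1)) k d
      = restrictSupport k {x : Fin (n+1) →₀ ℕ | x.degree = d} :=
    homogeneousSubmodule_eq_finsupp_supported _ _ d
  rw [h1, Module.finrank_eq_nat_card_basis (basisRestrictSupport k _)]
  have h2 : {x : Fin (n+1) →₀ ℕ | x.degree = d}
      = ↑(Finset.finsuppAntidiag (Finset.univ : Finset (Fin (n+1))) d) := by
    ext x
    simp [Finset.mem_finsuppAntidiag, Finsupp.degree_eq_sum]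
  rw [h2]
  simp only [SetLike.coe_sort_coe, Nat.card_eq_fintype_card, Fintype.card_coe]
  rw [Finset.card_finsuppAntidiag_nat_eq_choose]
  simp only [Finset.card_univ, Fintype.card_fin]
  rw [show n + 1 + d - 1 = n + d by omega]
  exact (Nat.choose_symm_add).symm

/-- The linear form with coefficient vector `a`. -/
noncomputable def linForm {k : Type*} [Field k] {N : ℕ} (a : Fin N → k) : MvPolynomial (Fin N) k :=
  ∑ i, C (a i) * X i

theorem linForm_homog {k : Type*} [Field k] {N : ℕ} (a : Fin N → k) :
    (linForm a).IsHomogeneous 1 :=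
  IsHomogeneous.sum _ _ _ fun _ _ => isHomogeneous_C_mul_X _ _

theorem eval_linForm {k : Type*} [Field k] {N : ℕ} (a v : Fin N → k) :
    eval v (linForm a) = a ⬝ᵥ v := by
  simp [linForm, dotProduct]

theorem pderiv_linForm {k : Type*} [Field k] {N : ℕ} (a : Fin N → k) (i : Fin N) :
    pderiv i (linForm a) = C (a i) := by
  simp only [linForm, map_sum, pderiv_C_mul, pderiv_X, Pi.single_apply]
  simp

theorem binary_form {k : Type*} [Field k] (α β : ℕ → k) (n : ℕ) :
    ∃ a : ℕ → k, ∀ s t : k, ∑ i ∈ Finset.range (n+1), a i * (s ^ (n - i) * t ^ i)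
      = ∏ j ∈ Finset.range n, (α j * s + β j * t) := by
  induction n with
  | zero => exact ⟨fun _ => 1, by simp⟩
  | succ n ih =>
    obtain ⟨a, ha⟩ := ih
    refine ⟨fun i => (if i ≤ n then α n * a i else 0) + (if i = 0 then 0 else β n * a (i-1)), ?_⟩
    intro s t
    rw [Finset.prod_range_succ, ← ha]
    simp only [add_mul, Finset.sum_add_distrib]
    rw [Finset.sum_range_succ, Finset.sum_range_succ' _ (n+1)]
    simp only [mul_add, Finset.sum_mul]
    simp only [Nat.not_succ_le_self, zero_mul, add_zero, Nat.add_eq_zero_iff,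
      one_ne_zero, and_false, Nat.add_sub_cancel, ↓reduceIte]
    congr 1
    · apply Finset.sum_congr rfl
      intro i hi
      have : i ≤ n := by simpa [Nat.lt_succ_iff] using hi
      rw [if_pos this, show n + 1 - i = (n - i) + 1 by omega, pow_succ]
      ring
    · apply Finset.sum_congr rfl
      intro i hi
      rw [Nat.add_sub_add_right, pow_succ]
      ring

theorem enum_cover {α : Type*} (A B : Finset α) (hBA : B ⊆ A) (hA : A.Nonempty) :
    ∃ g : ℕ → α, (∀ i, g i ∈ A) ∧ ∀ b ∈ B, ∃ i < B.card, g i = b := by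
  obtain ⟨a0, ha0⟩ := hA
  refine ⟨fun i => if h : i < B.card then (B.equivFin.symm ⟨i, h⟩ : α) else a0, ?_, ?_⟩
  · intro i
    dsimp only
    split_ifs with h
    · exact hBA (Subtype.coe_prop _)
    · exact ha0
  · intro b hb
    refine ⟨(B.equivFin ⟨b, hb⟩ : Fin _), (B.equivFin ⟨b, hb⟩).2, ?_⟩
    simp

theorem distribute {α : Type*} [DecidableEq α] (A B : Finset α) (hBA : B ⊆ A) (n m : ℕ)
    (hm : 2 ≤ m) (hc : A.card + B.card ≤ n * m) :
    ∃ T : ℕ → Finset α, (∀ r, T r ⊆ A ∧ (T r).card ≤ n) ∧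
      (∀ a ∈ A, ∃ r < m, a ∈ T r) ∧
      (∀ b ∈ B, ∃ r < m, ∃ r' < m, r ≠ r' ∧ b ∈ T r ∧ b ∈ T r') := by
  rcases A.eq_empty_or_nonempty with hA | hA
  · subst hA
    have : B = ∅ := Finset.subset_empty.mp hBA
    subst this
    exact ⟨fun _ => ∅, by simp, by simp, by simp⟩
  obtain ⟨g, hg, hgB⟩ := enum_cover A B hBA hA
  obtain ⟨h, hh, hhB⟩ := enum_cover A (A \ B) Finset.sdiff_subset hA
  have hcard := Finset.card_sdiff_add_card_eq_card hBA
  let f : ℕ → α := fun j => if j < 2 * B.card then g (j / 2) else h (j - 2 * B.card)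
  have hf : ∀ j, f j ∈ A := by
    intro j
    dsimp only [f]
    split_ifs
    · exact hg _
    · exact hh _
  let T : ℕ → Finset α := fun r => (Finset.range n).image fun i => f (i * m + r)
  have key : ∀ j < n * m, f j ∈ T (j % m) := by
    intro j hj
    refine Finset.mem_image.mpr ⟨j / m, ?_, ?_⟩
    · rw [Finset.mem_range]
      exact Nat.div_lt_of_lt_mul (by rwa [mul_comm])
    · rw [Nat.div_add_mod']
  have keyB : ∀ b ∈ B, ∃ r < m, ∃ r' < m, r ≠ r' ∧ b ∈ T r ∧ b ∈ T r' := by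
    intro b hb
    obtain ⟨i, hi, rfl⟩ := hgB b hb
    refine ⟨(2*i) % m, Nat.mod_lt _ (by omega), (2*i+1) % m, Nat.mod_lt _ (by omega), ?_, ?_, ?_⟩
    · intro he
      have : (2 * i + 0) ≡ (2 * i + 1) [MOD m] := he
      have h2 := Nat.ModEq.add_left_cancel' _ this
      have h3 : 0 % m = 1 % m := h2
      rw [Nat.mod_eq_of_lt (by omega), Nat.mod_eq_of_lt (by omega)] at h3
      omega
    · have := key (2*i) (by omega)
      have h2 : f (2*i) = g i := by
        dsimp only [f]
        rw [if_pos (by omega)]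
        congr 1
        omega
      rwa [h2] at this
    · have := key (2*i+1) (by omega)
      have h2 : f (2*i+1) = g i := by
        dsimp only [f]
        rw [if_pos (by omega)]
        congr 1
        omega
      rwa [h2] at this
  refine ⟨T, fun r => ⟨?_, ?_⟩, ?_, keyB⟩
  · intro x hx
    obtain ⟨i, -, rfl⟩ := Finset.mem_image.mp hx
    exact hf _
  · exact Finset.card_image_le.trans (by simp)
  · intro a ha
    by_cases hb : a ∈ B
    · obtain ⟨r, hr, -, -, -, h1, -⟩ := keyB a hb
      exact ⟨r, hr, h1⟩
    · obtain ⟨i, hi, rfl⟩ := hhB a (Finset.mem_sdiff.mpr ⟨ha, hb⟩)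
      refine ⟨(2 * B.card + i) % m, Nat.mod_lt _ (by omega), ?_⟩
      have := key (2 * B.card + i) (by omega)
      have h2 : f (2 * B.card + i) = h i := by
        dsimp only [f]
        rw [if_neg (by omega)]
        congr 1
        omega
      rwa [h2] at this

/-- Linear separation: any at most `n` points of `S` are separated from any further point of `S`
by a linear form. -/
def LinSep {k : Type*} [Field k] {P : Type*} {N : ℕ} (v : P → Fin N → k) (S : Finset P) (n : ℕ) :
    Prop :=
  ∀ p ∈ S, ∀ T ⊆ S, T.card ≤ n → p ∉ T →
    ∃ a : Fin N → k, (∀ q ∈ T, a ⬝ᵥ v q = 0) ∧ a ⬝ᵥ v p ≠ 0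

theorem exists_cover {k : Type*} [Field k] {P : Type*} [DecidableEq P] {N : ℕ}
    (v : P → Fin N → k) (S : Finset P) (n : ℕ) (hsep : LinSep v S n)
    (A B : Finset P) (hBA : B ⊆ A) (hAS : A ⊆ S) (p : P) (hp : p ∈ S) (hpA : p ∉ A)
    (m : ℕ) (hm : 2 ≤ m) (hc : A.card + B.card ≤ n * m) :
    ∃ G : MvPolynomial (Fin N) k, G.IsHomogeneous m ∧ eval (v p) G ≠ 0 ∧
      (∀ a ∈ A, eval (v a) G = 0) ∧ (∀ b ∈ B, ∀ i, eval (v b) (pderiv i G) = 0) := by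
  obtain ⟨T, hT, hTA, hTB⟩ := distribute A B hBA n m hm hc
  have h1 : ∀ r, ∃ a : Fin N → k, (∀ q ∈ T r, a ⬝ᵥ v q = 0) ∧ a ⬝ᵥ v p ≠ 0 := fun r =>
    hsep p hp (T r) ((hT r).1.trans hAS) (hT r).2 fun h => hpA ((hT r).1 h)
  choose a ha hap using h1
  refine ⟨∏ r ∈ Finset.range m, linForm (a r), ?_, ?_, ?_, ?_⟩
  · have := IsHomogeneous.prod (Finset.range m) (fun r => linForm (a r)) (fun _ => 1)
      fun r _ => linForm_homog (a r)
    simpa using this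
  · rw [map_prod, Finset.prod_ne_zero_iff]
    intro r _
    rw [eval_linForm]
    exact hap r
  · intro q hq
    obtain ⟨r, hr, hqr⟩ := hTA q hq
    rw [map_prod]
    refine Finset.prod_eq_zero (Finset.mem_range.mpr hr) ?_
    rw [eval_linForm]
    exact ha r q hqr
  · intro q hq i
    obtain ⟨r, hr, r', hr', hne, hqr, hqr'⟩ := hTB q hq
    rw [← Finset.mul_prod_erase _ _ (Finset.mem_range.mpr hr), Derivation.leibniz]
    have e1 : eval (v q) (linForm (a r)) = 0 := by rw [eval_linForm]; exact ha r q hqr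
    have e2 : eval (v q) (∏ x ∈ (Finset.range m).erase r, linForm (a x)) = 0 := by
      rw [map_prod]
      refine Finset.prod_eq_zero (i := r') (Finset.mem_erase.mpr
        ⟨hne.symm, Finset.mem_range.mpr hr'⟩) ?_
      rw [eval_linForm]
      exact ha r' q hqr'
    simp only [smul_eq_mul, map_add, map_mul, e1, e2, zero_mul, add_zero]

/-- Gradient at `v`, as a linear map. -/
noncomputable def gradAt {k : Type*} [Field k] {N : ℕ} (v : Fin N → k) :
    MvPolynomial (Fin N) k →ₗ[k] (Fin N → k) :=
  LinearMap.pi fun i => (evalLM k v).comp (MvPolynomial.pderiv i).toLinearMap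

theorem gradAt_apply {k : Type*} [Field k] {N : ℕ} (v : Fin N → k)
    (F : MvPolynomial (Fin N) k) (i : Fin N) : gradAt v F i = eval v (pderiv i F) := by
  simp [gradAt, evalLM, MvPolynomial.aeval_eq_eval]

theorem gradAt_dot {k : Type*} [Field k] {N : ℕ} (v : Fin N → k)
    (F : MvPolynomial (Fin N) k) (d : ℕ) (hF : F.IsHomogeneous d) :
    gradAt v F ⬝ᵥ v = d * eval v F := by
  have := congrArg (eval v) hF.sum_X_mul_pderiv
  simp only [map_sum, map_mul, eval_X, nsmul_eq_mul, map_natCast] at this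
  rw [← this, dotProduct]
  simp only [gradAt_apply, mul_comm]

theorem gradAt_mul {k : Type*} [Field k] {N : ℕ} (v : Fin N → k)
    (F G : MvPolynomial (Fin N) k) :
    gradAt v (F * G) = eval v F • gradAt v G + eval v G • gradAt v F := by
  ext i
  simp [gradAt_apply, Derivation.leibniz]

theorem gradAt_linForm {k : Type*} [Field k] {N : ℕ} (v a : Fin N → k) :
    gradAt v (linForm a) = a := by
  ext i
  simp [gradAt_apply, pderiv_linForm]

theorem exists_step {k : Type*} [Field k] {P : Type*} [DecidableEq P] {N : ℕ}
    (v : P → Fin N → k) (S : Finset P) (n d : ℕ) (hd : 4 ≤ d) (hsep : LinSep v S n)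
    (hcard : 2 * S.card ≤ n * d + 1)
    (p : P) (hp : p ∈ S) (Q : Finset P) (hQ : Q ⊆ S.erase p) (hQn : n ≤ Q.card + 1)
    (a : Fin N → k) (ha : ∀ q ∈ Q, a ⬝ᵥ v q = 0) :
    ∃ G : MvPolynomial (Fin N) k, eval (v p) G ≠ 0 ∧ (linForm a * G).IsHomogeneous d ∧
      ∀ q ∈ S.erase p, gradAt (v q) (linForm a * G) = 0 := by
  have hc1 := Finset.card_sdiff_add_card_eq_card hQ
  have hc2 := Finset.card_erase_add_one hp
  obtain ⟨m, rfl⟩ : ∃ m, d = 1 + m := ⟨d - 1, by omega⟩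
  obtain ⟨G, hG, hGp, hGA, hGB⟩ := exists_cover v S n hsep (S.erase p) (S.erase p \ Q)
    Finset.sdiff_subset (Finset.erase_subset _ _) p hp (Finset.notMem_erase _ _) m (by omega)
    (by rw [mul_add] at hcard; omega)
  refine ⟨G, hGp, (linForm_homog a).mul hG, ?_⟩
  intro q hq
  rw [gradAt_mul, hGA q hq, zero_smul, add_zero]
  by_cases hqQ : q ∈ Q
  · rw [eval_linForm, ha q hqQ, zero_smul]
  · have : gradAt (v q) G = 0 := by
      ext i
      rw [gradAt_apply]
      exact hGB q (Finset.mem_sdiff.mpr ⟨hq, hqQ⟩) i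
    rw [this, smul_zero]

theorem exists_grad {k : Type*} [Field k] [CharZero k] {P : Type*} [DecidableEq P] (n d : ℕ)
    (v : P → Fin (n+1) → k) (S : Finset P) (hd : 4 ≤ d) (hsep : LinSep v S n)
    (hcard : 2 * S.card ≤ n * d + 1) (hcard' : n + 1 ≤ S.card)
    (p : P) (hp : p ∈ S) (u : Fin (n+1) → k) :
    ∃ F : MvPolynomial (Fin (n+1)) k, F.IsHomogeneous d ∧
      (∀ q ∈ S.erase p, gradAt (v q) F = 0) ∧ gradAt (v p) F = u := by
  let W : Submodule k (MvPolynomial (Fin (n+1)) k) :=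
    homogeneousSubmodule (Fin (n+1)) k d ⊓ ⨅ q ∈ S.erase p, LinearMap.ker (gradAt (v q))
  have hW : ∀ F, F ∈ W ↔ F.IsHomogeneous d ∧ ∀ q ∈ S.erase p, gradAt (v q) F = 0 := by
    intro F
    simp only [W, Submodule.mem_inf, mem_homogeneousSubmodule, Submodule.mem_iInf,
      LinearMap.mem_ker]
  suffices hR : W.map (gradAt (v p)) = ⊤ by
    have hu : u ∈ W.map (gradAt (v p)) := by rw [hR]; trivial
    obtain ⟨F, hF, hFu⟩ := hu
    exact ⟨F, ((hW F).1 hF).1, ((hW F).1 hF).2, hFu⟩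
  by_contra hne
  obtain ⟨f, hf0, hf⟩ := Submodule.exists_le_ker_of_lt_top _ (lt_top_iff_ne_top.mpr hne)
  let w : Fin (n+1) → k := fun i => f (Pi.single i 1)
  have hfw : ∀ x, f x = x ⬝ᵥ w := by
    intro x
    rw [LinearMap.pi_apply_eq_sum_univ f x]
    simp only [dotProduct, smul_eq_mul, w]
    refine Finset.sum_congr rfl fun i _ => ?_
    congr 2
    ext j
    simp [Pi.single_apply, eq_comm]
  have hker : ∀ F ∈ W, gradAt (v p) F ⬝ᵥ w = 0 := by
    intro F hF
    rw [← hfw]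
    exact hf (Submodule.mem_map_of_mem hF)
  obtain ⟨Q, hQ, hQn⟩ := Finset.exists_subset_card_eq (s := S.erase p) (n := n)
    (by rw [Finset.card_erase_of_mem hp]; omega)
  have hpQ : p ∉ Q := fun h => Finset.notMem_erase p S (hQ h)
  have hIS : insert p Q ⊆ S :=
    Finset.insert_subset hp (hQ.trans (Finset.erase_subset _ _))
  have hIc : (insert p Q).card = n + 1 := by rw [Finset.card_insert_of_notMem hpQ, hQn]
  have hsepI : ∀ q : ↥(insert p Q), ∃ a : Fin (n+1) → k,
      (∀ r ∈ (insert p Q).erase q, a ⬝ᵥ v r = 0) ∧ a ⬝ᵥ v q ≠ 0 := by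
    intro q
    refine hsep q (hIS q.2) _ ((Finset.erase_subset _ _).trans hIS) ?_ (Finset.notMem_erase _ _)
    rw [Finset.card_erase_of_mem q.2, hIc]
    omega
  choose a ha hane using hsepI
  have hsum : ∀ (c : ↥(insert p Q) → k) (q : ↥(insert p Q)),
      a q ⬝ᵥ (∑ r, c r • v r) = c q * (a q ⬝ᵥ v q) := by
    intro c q
    rw [dotProduct_sum, Finset.sum_eq_single q]
    · rw [dotProduct_smul, smul_eq_mul]
    · intro r _ hr
      rw [dotProduct_smul, ha q r (Finset.mem_erase.mpr ⟨fun h => hr (Subtype.ext h), r.2⟩),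
        smul_zero]
    · intro h
      exact absurd (Finset.mem_univ _) h
  have hli : LinearIndependent k (fun q : ↥(insert p Q) => v q) := by
    rw [Fintype.linearIndependent_iff]
    intro c hc q
    have := hsum c q
    rw [hc, dotProduct_zero] at this
    exact (mul_eq_zero.mp this.symm).resolve_right (hane q)
  have hspan := hli.span_eq_top_of_card_eq_finrank' (by
    rw [Fintype.card_coe, hIc, Module.finrank_fin_fun])
  have hw : w ∈ Submodule.span k (Set.range fun q : ↥(insert p Q) => v q) := by
    rw [hspan]; trivial
  obtain ⟨c, hc⟩ := (Submodule.mem_span_range_iff_exists_fun k).mp hw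
  let p' : ↥(insert p Q) := ⟨p, Finset.mem_insert_self _ _⟩
  have hcq : ∀ q, q ≠ p' → c q = 0 := by
    intro q hq
    have hqp : (q : P) ≠ p := fun h => hq (Subtype.ext h)
    have hqQ : (q : P) ∈ Q := (Finset.mem_insert.mp q.2).resolve_left hqp
    obtain ⟨G, hGp, hGh, hGg⟩ := exists_step v S n d hd hsep hcard p hp (Q.erase q)
      ((Finset.erase_subset _ _).trans hQ) (by rw [Finset.card_erase_of_mem hqQ]; omega) (a q)
      (fun r hr => ha q r (Finset.mem_erase.mpr ⟨(Finset.mem_erase.mp hr).1,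
        Finset.mem_insert_of_mem (Finset.mem_erase.mp hr).2⟩))
    have h1 := hker _ ((hW _).2 ⟨hGh, hGg⟩)
    have h2 : a q ⬝ᵥ v p = 0 := ha q p (Finset.mem_erase.mpr ⟨hqp.symm, p'.2⟩)
    rw [gradAt_mul, eval_linForm, h2, zero_smul, zero_add, gradAt_linForm, smul_dotProduct,
      ← hc, hsum, smul_eq_mul] at h1
    exact (mul_eq_zero.mp ((mul_eq_zero.mp h1).resolve_left hGp)).resolve_right (hane q)
  have hwp : w = c p' • v p := by
    rw [← hc, Finset.sum_eq_single p']
    · intro r _ hr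
      rw [hcq r hr, zero_smul]
    · intro h
      exact absurd (Finset.mem_univ _) h
  have hcp : c p' = 0 := by
    obtain ⟨G, hGp, hGh, hGg⟩ := exists_step v S n d hd hsep hcard p hp Q hQ (by omega) (a p')
      (fun r hr => ha p' r (Finset.mem_erase.mpr ⟨fun h => hpQ (by
        have h' : r = p := h
        rwa [h'] at hr),
        Finset.mem_insert_of_mem hr⟩))
    have h1 := hker _ ((hW _).2 ⟨hGh, hGg⟩)
    rw [hwp, dotProduct_smul, gradAt_dot _ _ d hGh, map_mul, eval_linForm, smul_eq_mul] at h1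
    refine (mul_eq_zero.mp h1).resolve_right ?_
    have hd0 : (d : k) ≠ 0 := by
      rw [Nat.cast_ne_zero]; omega
    exact mul_ne_zero hd0 (mul_ne_zero (hane p') hGp)
  apply hf0
  refine LinearMap.ext fun x => ?_
  rw [hfw, hwp, hcp]
  simp

theorem h1_of_sep (k : Type*) [Field k] [CharZero k] (n d : ℕ) (hd : 4 ≤ d)
    (S : Finset (ProjSpace k n)) (hsep : LinSep (fun p : ProjSpace k n => p.rep) S n)
    (hcard : 2 * S.card ≤ n * d + 1) (hcard' : n + 1 ≤ S.card) : h1 k n d S = 0 := by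
  classical
  let Φ0 : MvPolynomial (Fin (n+1)) k →ₗ[k] (S → Fin (n+1) → k) :=
    LinearMap.pi fun p => gradAt (p : ProjSpace k n).rep
  let H := homogeneousSubmodule (Fin (n+1)) k d
  let Φ : H →ₗ[k] (S → Fin (n+1) → k) := Φ0.comp H.subtype
  have : Module.Finite k H := Module.Finite.iff_fg.mpr (homogeneousSubmodule_fg _ _ d)
  have hsurj : LinearMap.range Φ = ⊤ := by
    rw [LinearMap.range_eq_top]
    intro u
    choose! F hF1 hF2 hF3 using fun (p : ProjSpace k n) (hp : p ∈ S) (u : Fin (n+1) → k) =>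
      exists_grad n d (fun p : ProjSpace k n => p.rep) S hd hsep hcard hcard' p hp u
    refine ⟨⟨∑ p : S, F p (u p), ?_⟩, ?_⟩
    · exact Submodule.sum_mem _ fun p _ => hF1 p p.2 (u p)
    · funext q
      change gradAt (q : ProjSpace k n).rep (∑ p : S, F p (u p)) = u q
      rw [map_sum, Finset.sum_eq_single q]
      · exact hF3 q q.2 (u q)
      · intro p _ hpq
        exact hF2 p p.2 (u p) q (Finset.mem_erase.mpr ⟨fun h => hpq (Subtype.ext h.symm), q.2⟩)
      · intro h
        exact absurd (Finset.mem_univ _) h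
  have hkereq : H ⊓ ⨅ p ∈ S, doubleVanishing k p.rep = (LinearMap.ker Φ).map H.subtype := by
    ext F
    simp only [Submodule.mem_inf, Submodule.mem_iInf, Submodule.mem_map, LinearMap.mem_ker]
    constructor
    · rintro ⟨hF, hF2⟩
      refine ⟨⟨F, hF⟩, ?_, rfl⟩
      funext p i
      have := hF2 p p.2
      simp only [doubleVanishing, Submodule.mem_inf, Submodule.mem_iInf, LinearMap.mem_ker] at this
      exact this.2 i
    · rintro ⟨⟨F', hF'⟩, h, rfl⟩
      refine ⟨hF', fun p hp => ?_⟩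
      have hg : gradAt p.rep F' = 0 := congrFun h ⟨p, hp⟩
      simp only [doubleVanishing, Submodule.mem_inf, Submodule.mem_iInf, LinearMap.mem_ker]
      refine ⟨?_, fun i => congrFun hg i⟩
      have h2 := gradAt_dot p.rep F' d hF'
      rw [hg, zero_dotProduct] at h2
      have hd0 : (d : k) ≠ 0 := by
        rw [Nat.cast_ne_zero]; omega
      have h3 := (mul_eq_zero.mp h2.symm).resolve_left hd0
      simpa [evalLM, MvPolynomial.aeval_eq_eval] using h3
  have hrn := LinearMap.finrank_range_add_finrank_ker Φ
  rw [hsurj, finrank_top, finrank_homog] at hrn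
  have hfr : Module.finrank k (S → Fin (n+1) → k) = S.card * (n+1) := by
    rw [Module.finrank_pi_fintype]
    simp
  have hh0 : h0 k n d S = Module.finrank k (LinearMap.ker Φ) := by
    unfold h0
    rw [show homogeneousSubmodule (Fin (n+1)) k d = H from rfl, hkereq]
    exact Submodule.finrank_map_subtype_eq _ _
  rw [hfr, ← hh0] at hrn
  unfold h1
  rw [← hrn]
  push_cast
  ring

theorem rnc_sep (k : Type*) [Field k] (n : ℕ) (C : Set (ProjSpace k n)) (hC : IsRNC k n C)
    (S : Finset (ProjSpace k n)) (hS : ↑S ⊆ C) (hS2 : 2 ≤ S.card) :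
    LinSep (fun p : ProjSpace k n => p.rep) S n := by
  classical
  obtain ⟨g, rfl⟩ := hC
  have h0 : ∀ p ∈ S, ∃ s t c : k, (s ≠ 0 ∨ t ≠ 0) ∧ p.submodule =
      Submodule.span k {g (stdRNCvec k n s t)} ∧ c ≠ 0 ∧ p.rep = c • g (stdRNCvec k n s t) := by
    intro p hp
    obtain ⟨s, t, hst, hsp⟩ := hS hp
    have : p.rep ∈ p.submodule := by
      rw [Projectivization.submodule_eq]
      exact Submodule.mem_span_singleton_self _
    rw [hsp] at this
    obtain ⟨c, hc⟩ := Submodule.mem_span_singleton.mp this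
    refine ⟨s, t, c, hst, hsp, ?_, hc.symm⟩
    rintro rfl
    rw [zero_smul] at hc
    exact p.rep_nonzero hc.symm
  choose! s t c hst hsp hc hrep using h0
  have hscale : ∀ (e x y : k), stdRNCvec k n (e * x) (e * y) = e ^ n • stdRNCvec k n x y := by
    intro e x y
    ext i
    have hi : (i : ℕ) ≤ n := Nat.lt_succ_iff.mp i.2
    simp only [stdRNCvec, Pi.smul_apply, smul_eq_mul, mul_pow]
    have h3 : e ^ n = e ^ (n - (i : ℕ)) * e ^ (i : ℕ) := by
      rw [← pow_add, Nat.sub_add_cancel hi]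
    rw [h3]
    ring
  have hdist : ∀ p ∈ S, ∀ q ∈ S, p ≠ q → t q * s p + (- s q) * t p ≠ 0 := by
    intro p hp q hq hpq h
    apply hpq
    obtain ⟨e, he1, he2⟩ : ∃ e, s p = e * s q ∧ t p = e * t q := by
      by_cases hs : s q = 0
      · have ht : t q ≠ 0 := (hst q hq).resolve_left (by simp [hs])
        have hsp0 : s p = 0 := by
          rw [hs] at h
          simpa [ht] using h
        exact ⟨t p / t q, by simp [hs, hsp0], by field_simp⟩
      · refine ⟨s p / s q, by field_simp, ?_⟩
        field_simp
        linear_combination -h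
    have hmem : p.rep ∈ q.submodule := by
      rw [hsp q hq, hrep p hp, he1, he2, hscale, map_smul]
      exact Submodule.smul_mem _ _ (Submodule.smul_mem _ _ (Submodule.mem_span_singleton_self _))
    rw [Projectivization.submodule_eq] at hmem
    obtain ⟨b, hb⟩ := Submodule.mem_span_singleton.mp hmem
    rw [← p.mk_rep, ← q.mk_rep, Projectivization.mk_eq_mk_iff']
    exact ⟨b, hb⟩
  intro p hp T hT hTn hpT
  obtain ⟨e, he, heT⟩ := enum_cover (S.erase p) T
    (fun x hx => Finset.mem_erase.mpr ⟨fun h => hpT (h ▸ hx), hT hx⟩)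
    (Finset.card_pos.mp (by rw [Finset.card_erase_of_mem hp]; omega))
  obtain ⟨a, ha⟩ := binary_form (fun j => t (e j)) (fun j => - s (e j)) n
  let f : (Fin (n+1) → k) →ₗ[k] k := ∑ i : Fin (n+1), a i • LinearMap.proj i
  let φ : (Fin (n+1) → k) →ₗ[k] k := f.comp (g.symm : (Fin (n+1) → k) →ₗ[k] (Fin (n+1) → k))
  have hφ : ∀ q ∈ S, φ q.rep = c q * ∏ j ∈ Finset.range n, (t (e j) * s q + - s (e j) * t q) := by
    intro q hq
    rw [hrep q hq, map_smul, smul_eq_mul, ← ha, Finset.sum_range]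
    simp [φ, f, stdRNCvec]
  have hdot : ∀ x, (fun i => φ (Pi.single i 1)) ⬝ᵥ x = φ x := by
    intro x
    rw [LinearMap.pi_apply_eq_sum_univ φ x]
    simp only [dotProduct, smul_eq_mul]
    refine Finset.sum_congr rfl fun i _ => ?_
    rw [mul_comm]
    congr 2
    ext j
    simp [Pi.single_apply, eq_comm]
  refine ⟨fun i => φ (Pi.single i 1), ?_, ?_⟩
  · intro q hq
    rw [hdot, hφ q (hT hq)]
    obtain ⟨i, hi, rfl⟩ := heT q hq
    rw [Finset.prod_eq_zero (Finset.mem_range.mpr (lt_of_lt_of_le hi hTn)), mul_zero]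
    ring
  · rw [hdot, hφ p hp]
    refine mul_ne_zero (hc p hp) (Finset.prod_ne_zero_iff.mpr fun j _ => ?_)
    have := Finset.mem_erase.mp (he j)
    exact hdist p hp (e j) this.2 this.1.symm

/-- Lemma: for `n ≥ 2`, `d ≥ 4`, any set of `⌈nd/2⌉` points on a rational normal curve
of `P^n` satisfies `h^1(I_{2S}(d)) = 0`. -/
theorem rnc_points_h1_eq_zero
    (k : Type*) [Field k] [IsAlgClosed k] [CharZero k]
    (n d : ℕ) (hn : 2 ≤ n) (hd : 4 ≤ d)
    (C : Set (ProjSpace k n)) (hC : IsRNC k n C)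
    (S : Finset (ProjSpace k n)) (hS : ↑S ⊆ C) (hcard : S.card = (n * d + 1) / 2) :
    h1 k n d S = 0 := by
  have h1 : 2 * n ≤ S.card := by
    rw [hcard]
    have : n * 4 ≤ n * d := Nat.mul_le_mul_left n hd
    omega
  exact h1_of_sep k n d hd S (rnc_sep k n C hC S hS (by omega)) (by omega) (by omega)
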